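/- arXiv:2105.00541 — 2 statements merged into one kernel-verified Lean document; each statement's English description precedes it below -/
import Mathlib

section
/- For every admissible Wilson loop diagram W = (𝒫,[n]) with k propagators, the column matroid of M_{V(𝒫)} is a positroid: there exists a real k×n matrix of rank k with all k×k minors nonnegative whose column matroid equals the column matroid of M_{V(𝒫)}. -/
/-- `b` lies strictly inside the cyclic interval going (in the increasing cyclic direction)
from `a` to `c` in `ZMod n`. -/
def Inside {n : ℕ} (a b c : ZMod n) : Prop :=
  0 < (b - a).val ∧ (b - a).val < (c - a).val

/-- Two propagators (given as ordered pairs representing unordered pairs) cross: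
exactly one endpoint of `q` lies strictly inside each of the two cyclic intervals into
which the endpoints of `p` divide `ZMod n`. -/
def Cross {n : ℕ} (p q : ZMod n × ZMod n) : Prop :=
  (Inside p.1 q.1 p.2 ∧ Inside p.2 q.2 p.1) ∨
    (Inside p.1 q.2 p.2 ∧ Inside p.2 q.1 p.1)

/-- The support `V_p = {i, i+1, j, j+1}` of a propagator `p = (i,j)`. -/
def propSupp {n : ℕ} (p : ZMod n × ZMod n) : Finset (ZMod n) :=
  {p.1, p.1 + 1, p.2, p.2 + 1}

/-- The support `V_P` of a multiset of propagators. -/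
def multiSupp {n : ℕ} (P : Multiset (ZMod n × ZMod n)) : Finset (ZMod n) :=
  (P.map propSupp).sup

/-- A Wilson loop diagram `(Ps, [n])` is admissible: no two propagators cross,
every nonempty subset `P` of the propagators satisfies `|V_P| ≥ |P| + 3`
(local density), and `n ≥ |Ps| + 4` (global density). -/
def Admissible (n : ℕ) (Ps : Multiset (ZMod n × ZMod n)) : Prop :=
  (∀ p ∈ Ps, ∀ q ∈ Ps, ¬ Cross p q) ∧
  (∀ P : Multiset (ZMod n × ZMod n), P ≤ Ps → P ≠ 0 →
    Multiset.card P + 3 ≤ (multiSupp P).card) ∧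
  Multiset.card Ps + 4 ≤ n


open MvPolynomial

/-- The polynomial ring `ℝ[x_{p,v}]` with variables indexed by propagator rows and
vertices of the diagram. -/
abbrev WR (k n : ℕ) : Type := MvPolynomial (Fin k × ZMod n) ℝ

/-- Its field of fractions `K`. -/
abbrev WF (k n : ℕ) : Type := FractionRing (WR k n)

/-- The matrix `M_{V(𝒫)}` of a Wilson loop diagram, with entries in `ℝ[x]`:
the `(p,v)` entry is `x_{p,v}` if `v ∈ V_p` and `0` otherwise. -/
noncomputable def MWpoly (k n : ℕ) (P : Fin k → ZMod n × ZMod n) :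
    Matrix (Fin k) (ZMod n) (WR k n) :=
  Matrix.of fun i v => if v ∈ propSupp (P i) then X (i, v) else 0

/-- The matrix `M_{V(𝒫)}` of a Wilson loop diagram, over the field `K`. -/
noncomputable def MW (k n : ℕ) (P : Fin k → ZMod n × ZMod n) :
    Matrix (Fin k) (ZMod n) (WF k n) :=
  Matrix.of fun i v => algebraMap (WR k n) (WF k n) (MWpoly k n P i v)

/-- Linear independence over `F` of the columns of a matrix indexed by a set `S`. -/
def ColsIndepW {k n : ℕ} {F : Type*} [Field F] (M : Matrix (Fin k) (ZMod n) F)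
    (S : Finset (ZMod n)) : Prop :=
  LinearIndependent F (fun j : {x : ZMod n // x ∈ S} => fun i : Fin k => M i (j : ZMod n))

def WTNN {k n : ℕ} (A : Matrix (Fin k) (Fin n) ℝ) : Prop :=
  ∀ f : Fin k → Fin n, Monotone f → 0 ≤ (A.submatrix id f).det

def wcolOp {k n : ℕ} (A : Matrix (Fin k) (Fin n) ℝ) (v w : Fin n) (c : ℝ) :
    Matrix (Fin k) (Fin n) ℝ :=
  Matrix.of fun q u => A q u + if u = v then c * A q w else 0

lemma wdet_noninj {k n : ℕ} (A : Matrix (Fin k) (Fin n) ℝ) (f : Fin k → Fin n)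
    (hf : ¬ Function.Injective f) : (A.submatrix id f).det = 0 := by
  simp only [Function.Injective, not_forall] at hf
  obtain ⟨s, t, h, hne⟩ := hf
  exact Matrix.det_zero_of_column_eq hne (fun q => by simp [h])

lemma wcolOp_det {k n : ℕ} (A : Matrix (Fin k) (Fin n) ℝ) (v w : Fin n) (c : ℝ)
    (f : Fin k → Fin n) (hf : Function.Injective f) (s : Fin k) (hs : f s = v) :
    ((wcolOp A v w c).submatrix id f).det = (A.submatrix id f).det +
      c * (A.submatrix id (Function.update f s w)).det := by
  have h1 : (wcolOp A v w c).submatrix id f =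
      (A.submatrix id f).updateCol s ((fun q => A q v) + c • (fun q => A q w)) := by
    ext q t
    by_cases ht : t = s
    · subst ht
      simp [wcolOp, hs]
    · have : f t ≠ v := fun h => ht (hf (h.trans hs.symm))
      simp [wcolOp, this, ht]
  rw [h1, Matrix.det_updateCol_add, Matrix.det_updateCol_smul]
  congr 2
  · congr 1
    ext q t
    by_cases ht : t = s
    · subst ht
      simp [hs]
    · simp [ht]
  · congr 1
    ext q t
    by_cases ht : t = s
    · subst ht
      simp
    · simp [ht]

lemma wcolOp_tnn {k n : ℕ} (A : Matrix (Fin k) (Fin n) ℝ) (v w : Fin n) (c : ℝ)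
    (hA : WTNN A)
    (h : ∀ f : Fin k → Fin n, StrictMono f → ∀ s, f s = v →
      0 ≤ c * (A.submatrix id (Function.update f s w)).det) :
    WTNN (wcolOp A v w c) := by
  intro f hf
  by_cases hi : Function.Injective f
  · have hsm : StrictMono f := hf.strictMono_of_injective hi
    by_cases hv : ∃ s, f s = v
    · obtain ⟨s, hs⟩ := hv
      rw [wcolOp_det A v w c f hi s hs]
      exact add_nonneg (hA f hf) (h f hsm s hs)
    · push Not at hv
      have : (wcolOp A v w c).submatrix id f = A.submatrix id f := by
        ext q t
        simp [wcolOp, hv t]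
      rw [this]
      exact hA f hf
  · rw [wdet_noninj _ f hi]

lemma wcolOp_tnn_right {k n : ℕ} (A : Matrix (Fin k) (Fin n) ℝ) (v w : Fin n) (c : ℝ)
    (hA : WTNN A) (hc : 0 ≤ c) (hvw : (w : ℕ) = v + 1) : WTNN (wcolOp A v w c) := by
  refine wcolOp_tnn A v w c hA fun f hf s hs => mul_nonneg hc (hA _ ?_)
  intro t u htu
  rcases htu.eq_or_lt with rfl | htu
  · rfl
  have h1 : (f t : ℕ) < f u := hf htu
  by_cases h2 : t = s
  · subst h2
    have : u ≠ t := htu.ne'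
    rw [Function.update_self, Function.update_of_ne this, Fin.le_def]
    rw [hs] at h1
    omega
  · by_cases h3 : u = s
    · subst h3
      rw [Function.update_self, Function.update_of_ne h2, Fin.le_def]
      rw [hs] at h1
      omega
    · rw [Function.update_of_ne h3, Function.update_of_ne h2]
      exact h1.le

lemma wcolOp_tnn_left {k n : ℕ} (A : Matrix (Fin k) (Fin n) ℝ) (v w : Fin n) (c : ℝ)
    (hA : WTNN A) (hc : 0 ≤ c) (hvw : (v : ℕ) = w + 1) : WTNN (wcolOp A v w c) := by
  refine wcolOp_tnn A v w c hA fun f hf s hs => mul_nonneg hc (hA _ ?_)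
  intro t u htu
  rcases htu.eq_or_lt with rfl | htu
  · rfl
  have h1 : (f t : ℕ) < f u := hf htu
  by_cases h2 : t = s
  · subst h2
    have : u ≠ t := htu.ne'
    rw [Function.update_self, Function.update_of_ne this, Fin.le_def]
    rw [hs] at h1
    omega
  · by_cases h3 : u = s
    · subst h3
      rw [Function.update_self, Function.update_of_ne h2, Fin.le_def]
      rw [hs] at h1
      omega
    · rw [Function.update_of_ne h3, Function.update_of_ne h2]
      exact h1.le

lemma wcolOp_tnn_wrap {k n : ℕ} (A : Matrix (Fin (k+1)) (Fin n) ℝ) (v w : Fin n) (c : ℝ)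
    (hA : WTNN A) (hc : 0 ≤ (-1) ^ k * c) (hv : (v : ℕ) = 0) (hw : (w : ℕ) + 1 = n) :
    WTNN (wcolOp A v w c) := by
  refine wcolOp_tnn A v w c hA fun f hf s hs => ?_
  have hs0 : s = 0 := by
    by_contra h
    have h1 : f 0 < f s := hf (Fin.pos_of_ne_zero h)
    rw [hs, Fin.lt_def] at h1
    omega
  subst hs0
  have h1 := Matrix.det_permute' (finRotate (k+1)) (A.submatrix id (Function.update f 0 w))
  rw [sign_finRotate, Matrix.submatrix_submatrix] at h1
  have h2 : 0 ≤ (A.submatrix id (Function.update f 0 w ∘ finRotate (k+1))).det := by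
    apply hA
    intro t u htu
    have hle : ∀ x : Fin n, x ≤ w := fun x => by rw [Fin.le_def]; omega
    simp only [Function.comp]
    by_cases hu : u = Fin.last k
    · subst hu
      rw [finRotate_last, Function.update_self]
      exact hle _
    · have ht : t ≠ Fin.last k := by
        rintro rfl
        exact hu (Fin.last_le_iff.mp htu)
      have e1 := coe_finRotate_of_ne_last hu
      have e2 := coe_finRotate_of_ne_last ht
      rw [Function.update_of_ne, Function.update_of_ne]
      · apply hf.monotone
        rw [Fin.le_def] at htu ⊢
        omega
      · intro h; rw [h] at e1; simp at e1
      · intro h; rw [h] at e2; simp at e2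
  simp only [Function.comp_id, CompTriple.comp_eq] at h1
  rw [h1] at h2
  have h3 := mul_nonneg hc h2
  have h4 : ((-1:ℝ)^k) * (-1)^k = 1 := by rw [← mul_pow]; simp
  simp only [Nat.add_sub_cancel, Units.val_pow_eq_pow_val, Units.val_neg, Units.val_one, Int.cast_pow, Int.cast_neg, Int.cast_one] at h3
  calc 0 ≤ _ := h3
    _ = ((-1:ℝ)^k * (-1)^k) * (c * (A.submatrix id (Function.update f 0 w)).det) := by ring
    _ = _ := by rw [h4, one_mul]

lemma wprod_sign {k : ℕ} (t : Fin (k+1)) :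
    ∏ u : Fin k, (if t.succAbove u < t then (-1:ℝ) else 1) = (-1) ^ (t:ℕ) := by
  have h := Fin.prod_univ_succAbove (fun w : Fin (k+1) => if w < t then (-1:ℝ) else 1) t
  simp only [lt_irrefl, if_false, one_mul] at h
  rw [← h, Finset.prod_ite]
  simp only [Finset.prod_const, one_pow, mul_one]
  congr 1
  have : (Finset.univ.filter fun x => x < t) = Finset.Iio t := by ext; simp
  rw [this, Fin.card_Iio]

/-- Insertion of a row. -/
lemma winsert_tnn {k n : ℕ} (A : Matrix (Fin (k+1)) (Fin n) ℝ) (M : Matrix (Fin k) (Fin n) ℝ)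
    (p : Fin (k+1)) (v w : Fin n) (hvw : v < w) (hM : WTNN M)
    (hz : ∀ c, v < c → c < w → ∀ q, A q c = 0)
    (hpv : 0 ≤ (-1) ^ (p : ℕ) * A p v) (hpw : 0 ≤ (-1) ^ (p : ℕ) * A p w)
    (hp : ∀ c, c ≠ v → c ≠ w → A p c = 0)
    (hq : ∀ q c, A (p.succAbove q) c = (if c ≤ v then -1 else 1) * M q c) :
    WTNN A := by
  intro f hf
  by_cases hi : Function.Injective f
  swap
  · rw [wdet_noninj _ f hi]
  have hsm : StrictMono f := hf.strictMono_of_injective hi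
  by_cases hb : ∃ t, v < f t ∧ f t < w
  · obtain ⟨t, h1, h2⟩ := hb
    rw [Matrix.det_eq_zero_of_column_eq_zero t (fun q => by simpa using hz _ h1 h2 q)]
  push Not at hb
  rw [Matrix.det_succ_row _ p]
  apply Finset.sum_nonneg
  intro t _
  by_cases hft : f t = v ∨ f t = w
  swap
  · push Not at hft
    have : A.submatrix id f p t = 0 := by simpa using hp _ hft.1 hft.2
    rw [this]; simp
  have e1 : ((A.submatrix id f).submatrix p.succAbove t.succAbove) =
      Matrix.of fun i j => (if t.succAbove j < t then (-1:ℝ) else 1) *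
        (M.submatrix id (f ∘ t.succAbove)) i j := by
    ext i j
    simp only [Matrix.submatrix_apply, id, Matrix.of_apply, Function.comp, hq]
    congr 1
    have hne : t.succAbove j ≠ t := Fin.succAbove_ne t j
    have key : f (t.succAbove j) ≤ v ↔ t.succAbove j < t := by
      rw [← hsm.lt_iff_lt]
      have hne' : f (t.succAbove j) ≠ f t := fun h => hne (hi h)
      rcases hft with h | h
      · rw [h] at hne' ⊢
        exact ⟨fun h => lt_of_le_of_ne h hne', le_of_lt⟩
      · rw [h]
        refine ⟨fun h => lt_of_le_of_lt h hvw, fun h => ?_⟩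
        by_contra h'
        exact absurd h (not_lt.mpr (hb _ (not_le.mp h')))
    simp only [key]
  rw [e1, Matrix.det_mul_row, wprod_sign]
  have h5 : 0 ≤ (M.submatrix id (f ∘ t.succAbove)).det :=
    hM _ (hf.comp (Fin.strictMono_succAbove t).monotone)
  have h6 : 0 ≤ (-1) ^ (p : ℕ) * A p (f t) := by
    rcases hft with h | h <;> rw [h] <;> assumption
  have h4 : ((-1:ℝ)^(t:ℕ)) * (-1)^(t:ℕ) = 1 := by rw [← mul_pow]; simp
  have := mul_nonneg h6 h5
  calc 0 ≤ _ := this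
    _ = ((-1:ℝ)^(t:ℕ) * (-1)^(t:ℕ)) * ((-1) ^ (p : ℕ) * A p (f t) *
        (M.submatrix id (f ∘ t.succAbove)).det) := by rw [h4, one_mul]
    _ = _ := by simp only [Matrix.submatrix_apply, id, pow_add]; ring
def WS {k n : ℕ} (a a' b b' : Fin k → Fin n) (q : Fin k) (v : Fin n) : Prop :=
  v = a q ∨ v = a' q ∨ v = b q ∨ v = b' q

open Classical in
noncomputable def wmask {k n : ℕ} (S : Fin k → Fin n → Prop) (x : Fin k → Fin n → ℝ) :
    Matrix (Fin k) (Fin n) ℝ :=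
  Matrix.of fun q v => if S q v then x q v else 0

lemma wcont_mask {k n : ℕ} (S : Fin k → Fin n → Prop) (q : Fin k) (v : Fin n) :
    Continuous (fun x : Fin k → Fin n → ℝ => wmask S x q v) := by
  unfold wmask
  by_cases h : S q v
  · simp only [Matrix.of_apply, h, if_true]; fun_prop
  · simp only [Matrix.of_apply, h, if_false]; fun_prop

/-- Inductive step. -/
lemma wstep {k n : ℕ} (S : Fin (k+1) → Fin n → Prop) (p : Fin (k+1)) (a a' b b' : Fin n)
    (ha' : (a' : ℕ) = a + 1) (hab : (a : ℕ) + 2 ≤ b) (hba : b' ≠ a)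
    (hb' : (b' : ℕ) = b + 1 ∨ ((b : ℕ) + 1 = n ∧ (b' : ℕ) = 0))
    (hSp : ∀ v, S p v ↔ v = a ∨ v = a' ∨ v = b ∨ v = b')
    (H1 : ∀ q, S q a' → S q a) (H2 : ∀ q, S q b → S q b')
    (H3 : ∀ q c, a' < c → c < b → ¬ S q c)
    (U' : Set (Fin k → Fin n → ℝ)) (hU' : IsOpen U') (hne : U'.Nonempty)
    (hT : ∀ x ∈ U', WTNN (wmask (fun q => S (p.succAbove q)) x)) :
    ∃ U : Set (Fin (k+1) → Fin n → ℝ), IsOpen U ∧ U.Nonempty ∧ ∀ x ∈ U, WTNN (wmask S x) := by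
  classical
  have n1 : a' ≠ a := by intro h; rw [h] at ha'; omega
  have n2 : a' ≠ b := by intro h; rw [h] at ha'; omega
  have n3 : a' ≠ b' := by intro h; rw [h] at ha'; omega
  have n4 : b ≠ a := by intro h; rw [h] at hab; omega
  have n5 : b ≠ b' := by intro h; rw [← h] at hb'; omega
  obtain ⟨ε, hε⟩ : ∃ ε : ℝ, ε = (-1) ^ (p:ℕ) := ⟨_, rfl⟩
  obtain ⟨σ, hσ⟩ : ∃ σ : ℝ, σ = if (b' : ℕ) = 0 then (-1) ^ k else 1 := ⟨_, rfl⟩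
  have hε2 : ε * ε = 1 := by rw [hε, ← mul_pow]; simp
  have hσ2 : σ * σ = 1 := by
    rw [hσ]; split_ifs
    · rw [← mul_pow]; simp
    · simp
  have hε0 : ε ≠ 0 := by rintro rfl; simp at hε2
  let s : Fin n → ℝ := fun v => if v ≤ a' then -1 else 1
  have hs2 : ∀ v, s v * s v = 1 := by intro v; simp only [s]; split_ifs <;> norm_num
  let B : (Fin (k+1) → Fin n → ℝ) → Fin (k+1) → Fin n → ℝ := fun x q v =>
    (if v = a then (x p a / x p a') * wmask S x q a' else 0) +
      (if v = b' then (x p b' / x p b) * wmask S x q b else 0)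
  let T : (Fin (k+1) → Fin n → ℝ) → (Fin k → Fin n → ℝ) := fun x q v =>
    s v * (x (p.succAbove q) v - B x (p.succAbove q) v)
  let O : Set (Fin (k+1) → Fin n → ℝ) :=
    {x | 0 < ε * x p a'} ∩ {x | 0 < ε * x p b} ∩ {x | 0 < ε * x p a} ∩ {x | 0 < σ * ε * x p b'}
  have hO : IsOpen O := by
    refine IsOpen.inter (IsOpen.inter (IsOpen.inter ?_ ?_) ?_) ?_ <;>
      exact isOpen_lt (by fun_prop) (by fun_prop)
  have hTc : ContinuousOn T O := by
    refine continuousOn_pi.2 fun q => continuousOn_pi.2 fun v => ?_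
    simp only [T, B]
    refine ContinuousOn.mul continuousOn_const (ContinuousOn.sub (by fun_prop) (ContinuousOn.add ?_ ?_))
    · split_ifs
      · refine ContinuousOn.mul (ContinuousOn.div (by fun_prop) (by fun_prop) ?_)
          (wcont_mask _ _ _).continuousOn
        intro x hx h
        have := hx.1.1.1
        simp [h] at this
      · exact continuousOn_const
    · split_ifs
      · refine ContinuousOn.mul (ContinuousOn.div (by fun_prop) (by fun_prop) ?_)
          (wcont_mask _ _ _).continuousOn
        intro x hx h
        have := hx.1.1.2
        simp [h] at this
      · exact continuousOn_const
  refine ⟨O ∩ T ⁻¹' U', hTc.isOpen_inter_preimage hO hU', ?_, ?_⟩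
  · obtain ⟨y, hy⟩ := hne
    let x0 : Fin k → Fin n → ℝ := fun r c => s c * y r c
    let m0 := wmask (fun q => S (p.succAbove q)) x0
    let x : Fin (k+1) → Fin n → ℝ := p.insertNth (fun c => if c = b' then σ * ε else ε)
      (fun r c => x0 r c + ((if c = a then m0 r a' else 0) + (if c = b' then σ * m0 r b else 0)))
    have xp : ∀ c, x p c = if c = b' then σ * ε else ε := by intro c; simp [x]
    have xr : ∀ r c, x (p.succAbove r) c = x0 r c + ((if c = a then m0 r a' else 0) +
        (if c = b' then σ * m0 r b else 0)) := by intro r c; simp [x]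
    have hm : ∀ r c, c ≠ a → c ≠ b' → wmask S x (p.succAbove r) c = m0 r c := by
      intro r c h1 h2
      simp [wmask, m0, xr, h1, h2]
    refine ⟨x, ⟨⟨⟨?_, ?_⟩, ?_⟩, ?_⟩, ?_⟩
    · simp [xp, n3, hε2]
    · simp [xp, n5, hε2]
    · simp [xp, hba.symm, hε2]
    · simp only [Set.mem_ofPred_eq, xp, if_true]
      have : σ * ε * (σ * ε) = (σ * σ) * (ε * ε) := by ring
      rw [this, hσ2, hε2]; norm_num
    · have : T x = y := by
        funext r v
        simp only [T, B, hm r a' n1 n3, hm r b n4 n5, xp, xr, if_neg n3, if_neg n5,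
          if_neg hba.symm, if_true, div_self hε0, one_mul, mul_div_assoc, mul_one]
        rw [add_sub_cancel_right]
        simp only [x0]
        rw [← mul_assoc, hs2, one_mul]
      simpa [this] using hy
  · rintro x ⟨⟨⟨⟨hx1, hx2⟩, hx3⟩, hx4⟩, hxU⟩
    simp only [Set.mem_ofPred_eq] at hx1 hx2 hx3 hx4
    have hxU' : T x ∈ U' := hxU
    have z1 : x p a' ≠ 0 := by intro h; simp [h] at hx1
    have z2 : x p b ≠ 0 := by intro h; simp [h] at hx2
    let A0 : Matrix (Fin (k+1)) (Fin n) ℝ := Matrix.of fun q c =>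
      if q = p then (if c = a' then x p a' else if c = b then x p b else 0)
      else wmask S x q c - B x q c
    have hA0 : WTNN A0 := by
      refine winsert_tnn A0 _ p a' b ?_ (hT _ hxU') ?_ ?_ ?_ ?_ ?_
      · rw [Fin.lt_def]; omega
      · intro c h1 h2 q
        have c1 : c ≠ a' := h1.ne'
        have c2 : c ≠ b := h2.ne
        rw [Fin.lt_def] at h1 h2
        have c3 : c ≠ a := by rintro rfl; omega
        have c4 : c ≠ b' := by rintro rfl; omega
        have := H3 q c h1 h2
        simp [A0, c1, c2, B, c3, c4, wmask, this]
      · simp only [A0, Matrix.of_apply, if_true, ← hε]; exact hx1.le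
      · simp only [A0, Matrix.of_apply, if_true, ← hε, if_neg n2.symm]; exact hx2.le
      · intro c h1 h2
        simp [A0, h1, h2]
      · intro q c
        simp only [A0, Matrix.of_apply, if_neg (Fin.succAbove_ne p q)]
        change _ = s c * _
        by_cases hS : S (p.succAbove q) c
        · simp only [wmask, T, Matrix.of_apply, hS, if_true]
          rw [← mul_assoc, hs2, one_mul]
        · have e1 : B x (p.succAbove q) c = 0 := by
            simp only [B]
            have t1 : c = a → wmask S x (p.succAbove q) a' = 0 := by
              rintro rfl
              have : ¬ S (p.succAbove q) a' := fun h => hS (H1 _ h)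
              simp [wmask, this]
            have t2 : c = b' → wmask S x (p.succAbove q) b = 0 := by
              rintro rfl
              have : ¬ S (p.succAbove q) b := fun h => hS (H2 _ h)
              simp [wmask, this]
            split_ifs with h1 h2 h2
            · simp [t1 h1, t2 h2]
            · simp [t1 h1]
            · simp [t2 h2]
            · simp
          rw [e1]
          simp [wmask, hS]
    have hc1 : 0 ≤ x p a / x p a' := by
      have : x p a / x p a' = (ε * x p a) / (ε * x p a') := by field_simp
      rw [this]; positivity
    have hc2 : 0 ≤ σ * (x p b' / x p b) := by
      have : σ * (x p b' / x p b) = (σ * ε * x p b') / (ε * x p b) := by field_simp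
      rw [this]; positivity
    have hA1 := wcolOp_tnn_right A0 a a' _ hA0 hc1 ha'
    have hA2 : WTNN (wcolOp (wcolOp A0 a a' (x p a / x p a')) b' b (x p b' / x p b)) := by
      rcases hb' with h | ⟨h, h'⟩
      · apply wcolOp_tnn_left _ _ _ _ hA1 _ h
        rw [hσ, if_neg (by omega), one_mul] at hc2
        exact hc2
      · apply wcolOp_tnn_wrap _ _ _ _ hA1 _ h' h
        rw [hσ, if_pos h'] at hc2
        exact hc2
    convert hA2 using 1
    ext q c
    by_cases hq : q = p
    · subst hq
      simp only [wmask, wcolOp, A0, Matrix.of_apply, hSp, if_true, if_neg n4, if_neg n2.symm]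
      by_cases c1 : c = a
      · subst c1
        simp [n1.symm, n4.symm, hba.symm, z1]
      by_cases c2 : c = a'
      · subst c2
        simp [n1, n3]
      by_cases c3 : c = b
      · subst c3
        simp [n2.symm, n4, n5]
      by_cases c4 : c = b'
      · subst c4
        simp [n3.symm, n5.symm, hba, z2]
      simp [c1, c2, c3, c4]
    · simp only [wcolOp, A0, Matrix.of_apply, if_neg hq, B, if_neg n1, if_neg n3, if_neg n4, if_neg n5]
      simp only [add_zero, sub_zero]
      ring

lemma wkey {n : ℕ} : ∀ (k : ℕ) (a a' b b' : Fin k → Fin n)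
    (_ : ∀ q, (a' q : ℕ) = a q + 1)
    (_ : ∀ q, (b' q : ℕ) = b q + 1 ∨ ((b q : ℕ) + 1 = n ∧ (b' q : ℕ) = 0))
    (_ : ∀ q, (a q : ℕ) + 2 ≤ b q) (_ : ∀ q, b' q ≠ a q)
    (_ : ∀ p q, ¬ (a p < a q ∧ a q < b p ∧ b p < b q)),
    ∃ U : Set (Fin k → Fin n → ℝ), IsOpen U ∧ U.Nonempty ∧
      ∀ x ∈ U, WTNN (wmask (WS a a' b b') x) := by
  intro k
  induction k with
  | zero =>
    intro a a' b b' _ _ _ _ _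
    refine ⟨Set.univ, isOpen_univ, Set.univ_nonempty, fun x _ f _ => ?_⟩
    simp
  | succ k ih =>
    intro a a' b b' ha' hb' hab hba hnc
    obtain ⟨p, -, hp⟩ := Finset.exists_min_image Finset.univ
      (fun q : Fin (k+1) => (b q : ℕ) - a q) ⟨0, Finset.mem_univ _⟩
    obtain ⟨U', h1, h2, h3⟩ := ih (a ∘ p.succAbove) (a' ∘ p.succAbove) (b ∘ p.succAbove)
      (b' ∘ p.succAbove) (fun q => ha' _) (fun q => hb' _) (fun q => hab _) (fun q => hba _)
      (fun q r => hnc _ _)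
    have I1 : ∀ q, ¬ ((a p : ℕ) < a q ∧ (a q : ℕ) < b p) := by
      intro q hq
      have := hp q (Finset.mem_univ _)
      have e := hnc p q
      simp only [Fin.lt_def] at e
      have := hab q
      omega
    have I2 : ∀ q, ¬ ((a p : ℕ) < b q ∧ (b q : ℕ) < b p) := by
      intro q hq
      have := hp q (Finset.mem_univ _)
      have e := hnc q p
      simp only [Fin.lt_def] at e
      have := hab q
      omega
    refine wstep _ p (a p) (a' p) (b p) (b' p) (ha' p) (hab p) (hba p) (hb' p)
      (fun v => Iff.rfl) ?_ ?_ ?_ U' h1 h2 h3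
    · intro q
      have := ha' p; have := ha' q; have := hb' p; have := hb' q; have := hab p; have := hab q
      have := I1 q; have := I2 q
      simp only [WS, Fin.ext_iff]
      omega
    · intro q
      have := ha' p; have := ha' q; have := hb' p; have := hb' q; have := hab p; have := hab q
      have := I1 q; have := I2 q
      have := (a' q).isLt
      simp only [WS, Fin.ext_iff]
      omega
    · intro q c
      have := ha' p; have := ha' q; have := hb' p; have := hb' q; have := hab p; have := hab q
      have := I1 q; have := I2 q
      simp only [WS, Fin.ext_iff, Fin.lt_def]
      omega
lemma wcols_iff {k n : ℕ} {F : Type*} [Field F] (M : Matrix (Fin k) (ZMod n) F)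
    (f0 : Fin k → ZMod n) (h0 : (M.submatrix id f0).det ≠ 0) (S : Finset (ZMod n)) :
    ColsIndepW M S ↔ ∃ f : Fin k → ZMod n, (M.submatrix id f).det ≠ 0 ∧
      (S : Set (ZMod n)) ⊆ Set.range f := by
  have hdet : ∀ f : Fin k → ZMod n, (M.submatrix id f).det ≠ 0 ↔
      LinearIndependent F (fun t => fun i => M i (f t)) := by
    intro f
    rw [← isUnit_iff_ne_zero, ← Matrix.isUnit_iff_isUnit_det,
      ← Matrix.linearIndependent_cols_iff_isUnit]
    rfl
  have hc : ColsIndepW M S ↔ LinearIndepOn F (fun v => fun i => M i v) (S : Set (ZMod n)) := Iff.rfl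
  rw [hc]
  constructor
  · intro hS
    obtain ⟨b, -, hSb, hsp, hb⟩ := exists_linearIndepOn_extension hS (Set.subset_univ _)
    have htop : Submodule.span F ((fun v => fun i => M i v) '' b) = ⊤ := by
      rw [eq_top_iff]
      have h1 := (hdet f0).1 h0
      have h2 := h1.span_eq_top_of_card_eq_finrank' (by simp)
      rw [← h2]
      apply Submodule.span_le.2
      rintro _ ⟨t, rfl⟩
      exact hsp ⟨f0 t, trivial, rfl⟩
    have hb' : LinearIndependent F (fun v : b => fun i => M i v) := hb
    have htop' : ⊤ ≤ Submodule.span F (Set.range (fun v : b => fun i => M i v)) := by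
      rw [← htop, Set.image_eq_range]
    let bs := Module.Basis.mk hb' htop'
    let e := bs.indexEquiv (Pi.basisFun F (Fin k))
    refine ⟨fun t => (e.symm t : ZMod n), ?_, ?_⟩
    · rw [hdet]
      exact hb'.comp _ e.symm.injective
    · intro v hv
      exact ⟨e ⟨v, hSb hv⟩, by simp⟩
  · rintro ⟨f, hf, hSf⟩
    rw [hdet] at hf
    have hinj : Function.Injective f := by
      intro s t h
      apply hf.injective
      simp [h]
    exact ((linearIndepOn_range_iff hinj _).2 hf).mono hSf

lemma wopen_poly {k n : ℕ} (U : Set (Fin k → Fin n → ℝ)) (hU : IsOpen U) (hne : U.Nonempty)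
    (G : MvPolynomial (Fin k × Fin n) ℝ) (hG : G ≠ 0) :
    ∃ x ∈ U, MvPolynomial.eval (fun z => x z.1 z.2) G ≠ 0 := by
  obtain ⟨x, hx⟩ := hne
  have hc : Continuous (fun y : Fin k × Fin n → ℝ => fun i j => y (i, j)) := by fun_prop
  have hV := hU.preimage hc
  have hmem : (fun z : Fin k × Fin n => x z.1 z.2) ∈
    (fun y : Fin k × Fin n → ℝ => fun i j => y (i, j)) ⁻¹' U := hx
  obtain ⟨r, hr, hball⟩ := Metric.isOpen_iff.1 hV _ hmem
  by_contra hcon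
  push Not at hcon
  apply hG
  refine MvPolynomial.funext_set (fun z => Metric.ball (x z.1 z.2) r) ?_ ?_
  · intro z
    rw [Real.ball_eq_Ioo]
    exact Set.Ioo_infinite (by linarith)
  · intro y hy
    rw [map_zero]
    have : y ∈ Metric.ball (fun z : Fin k × Fin n => x z.1 z.2) r := by
      rw [ball_pi _ hr]
      exact hy
    exact hcon _ (hball this)

lemma wfin_sub {m : ℕ} (a b : Fin (m+1)) :
    (a - b).val = if b.val ≤ a.val then a.val - b.val else m + 1 + a.val - b.val := by
  have ha := a.isLt
  have hb := b.isLt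
  split_ifs with h
  · exact Fin.sub_val_of_le h
  · rw [Fin.val_sub, Nat.mod_eq_of_lt] <;> omega

lemma wval_sub {m : ℕ} (a b : ZMod (m+1)) :
    (a - b).val = if b.val ≤ a.val then a.val - b.val else m + 1 + a.val - b.val :=
  wfin_sub a b

lemma wfin_succ {m : ℕ} (a : Fin (m+1)) :
    ((a + 1).val = a.val + 1 ∧ a.val < m) ∨ (a.val = m ∧ (a+1).val = 0) := by
  have h := Fin.val_add_one a
  have ha := a.isLt
  by_cases h' : a = Fin.last m
  · right
    rw [if_pos h'] at h
    exact ⟨by rw [h']; rfl, h⟩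
  · left
    rw [if_neg h'] at h
    have : a.val ≠ m := fun e => h' (Fin.ext e)
    omega

lemma wval_succ {m : ℕ} (a : ZMod (m+1)) :
    ((a + 1).val = a.val + 1 ∧ a.val < m) ∨ (a.val = m ∧ (a+1).val = 0) :=
  wfin_succ a

lemma wcard4 {n : ℕ} (p : ZMod n × ZMod n) (h : 4 ≤ (propSupp p).card) :
    p.1 ≠ p.2 ∧ p.1 + 1 ≠ p.2 ∧ p.1 ≠ p.2 + 1 := by
  obtain ⟨i, j⟩ := p
  unfold propSupp at h
  simp only at h ⊢
  refine ⟨?_, ?_, ?_⟩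
  · rintro rfl
    have : ({i, i + 1, i, i + 1} : Finset (ZMod n)) = {i, i+1} := by ext; simp
    rw [this] at h
    have := Finset.card_le_two (a := i) (b := i+1)
    omega
  · rintro rfl
    have : ({i, i + 1, i + 1, i + 1 + 1} : Finset (ZMod n)) = {i, i+1, i+1+1} := by ext; simp
    rw [this] at h
    have := Finset.card_le_three (a := i) (b := i+1) (c := i+1+1)
    omega
  · rintro rfl
    have : ({j + 1, j + 1 + 1, j, j + 1} : Finset (ZMod n)) = {j, j+1, j+1+1} := by
      ext; simp; tauto
    rw [this] at h
    have := Finset.card_le_three (a := j) (b := j+1) (c := j+1+1)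
    omega

lemma wadm {k m : ℕ} (P : Fin k → ZMod (m+1) × ZMod (m+1))
    (h4 : ∀ q, 4 ≤ (propSupp (P q)).card) (hX : ∀ p q, ¬ Cross (P p) (P q)) :
    ∃ U : Set (Fin k → Fin (m+1) → ℝ), IsOpen U ∧ U.Nonempty ∧
      ∀ x ∈ U, WTNN (wmask (fun q v => (v : ZMod (m+1)) ∈ propSupp (P q)) x) := by
  let lo : Fin k → ZMod (m+1) := fun q => if (P q).1.val ≤ (P q).2.val then (P q).1 else (P q).2
  let hi : Fin k → ZMod (m+1) := fun q => if (P q).1.val ≤ (P q).2.val then (P q).2 else (P q).1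
  have hlh : ∀ q, (lo q).val < (hi q).val ∧ lo q + 1 ≠ hi q ∧ hi q + 1 ≠ lo q ∧
      (((P q).1 = lo q ∧ (P q).2 = hi q) ∨ ((P q).1 = hi q ∧ (P q).2 = lo q)) := by
    intro q
    obtain ⟨e1, e2, e3⟩ := wcard4 _ (h4 q)
    have e4 : (P q).1.val ≠ (P q).2.val := fun h => e1 (ZMod.val_injective _ h)
    by_cases h : (P q).1.val ≤ (P q).2.val
    · simp only [lo, hi, if_pos h]
      exact ⟨by omega, e2, fun h => e3 h.symm, by simp⟩
    · simp only [lo, hi, if_neg h]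
      exact ⟨by omega, fun h => e3 h.symm, e2, by simp⟩
  let lo' : Fin k → ZMod (m+1) := fun q => lo q + 1
  let hi' : Fin k → ZMod (m+1) := fun q => hi q + 1
  have hmem : ∀ q (v : ZMod (m+1)), v ∈ propSupp (P q) ↔
      v = lo q ∨ v = lo' q ∨ v = hi q ∨ v = hi' q := by
    intro q v
    obtain ⟨-, -, -, h | h⟩ := hlh q
    · simp only [propSupp, h.1, h.2, Finset.mem_insert, Finset.mem_singleton, lo', hi']
    · simp only [propSupp, h.1, h.2, Finset.mem_insert, Finset.mem_singleton, lo', hi']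
      tauto
  have hS : (fun (q : Fin k) (v : Fin (m+1)) => (v : ZMod (m+1)) ∈ propSupp (P q)) =
      WS (n := m+1) lo lo' hi hi' := by
    funext q v
    exact propext (hmem q v)
  rw [hS]
  have hsucc : ∀ q, ((lo q + 1).val = (lo q).val + 1) := by
    intro q
    have := wval_succ (lo q)
    have := (hlh q).1
    have := ZMod.val_lt (hi q)
    omega
  refine wkey (n := m+1) k lo lo' hi hi' hsucc ?_ ?_ ?_ ?_
  · intro q
    change (hi q + 1).val = (hi q).val + 1 ∨ ((hi q).val + 1 = m + 1 ∧ (hi q + 1).val = 0)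
    have := wval_succ (hi q)
    omega
  · intro q
    change (lo q).val + 2 ≤ (hi q).val
    have h1 := hsucc q
    obtain ⟨h2, h3, -⟩ := hlh q
    have : (lo q + 1).val ≠ (hi q).val := fun h => h3 (ZMod.val_injective _ h)
    omega
  · intro q
    exact (hlh q).2.2.1
  · intro p q
    change ¬ ((lo p).val < (lo q).val ∧ (lo q).val < (hi p).val ∧ (hi p).val < (hi q).val)
    rintro ⟨h1, h2, h3⟩
    apply hX p q
    have b1 := ZMod.val_lt (hi q)
    unfold Cross Inside
    simp only [wval_sub]
    obtain ⟨-, -, -, ⟨e1, e2⟩ | ⟨e1, e2⟩⟩ := hlh p <;>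
    obtain ⟨-, -, -, ⟨e3, e4⟩ | ⟨e3, e4⟩⟩ := hlh q <;>
    rw [e1, e2, e3, e4] <;> split_ifs <;> omega
lemma wmulti {k n : ℕ} (P : Fin k → ZMod n × ZMod n) (s : Finset (Fin k)) :
    multiSupp (Multiset.map P s.val) = s.biUnion (fun q => propSupp (P q)) := by
  unfold multiSupp
  rw [Multiset.map_map]
  ext v
  rw [← Finset.sup_eq_biUnion]
  rfl

/-- for every admissible Wilson loop diagram with `k` propagators, the
column matroid of `M_{V(𝒫)}` is a positroid: there is a real `k×n` matrix of rank `k`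
with all (column-ordered) `k×k` minors nonnegative having exactly the same linearly
independent column sets as `M_{V(𝒫)}`. -/
theorem statement12 (k n : ℕ) [NeZero n] (P : Fin k → ZMod n × ZMod n)
    (hW : Admissible n (Multiset.map P Finset.univ.val)) :
    ∃ A : Matrix (Fin k) (ZMod n) ℝ, A.rank = k ∧
      (∀ f : Fin k → ZMod n, StrictMono (fun i => (f i).val) →
        0 ≤ (A.submatrix id f).det) ∧
      (∀ S : Finset (ZMod n), ColsIndepW A S ↔ ColsIndepW (MW k n P) S) := by
  classical
  obtain ⟨m, rfl⟩ : ∃ m, n = m + 1 := ⟨n - 1, by have := NeZero.ne n; omega⟩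
  obtain ⟨hX, hD, -⟩ := hW
  have hcard : ∀ s : Finset (Fin k), s.Nonempty →
      s.card + 3 ≤ (s.biUnion (fun q => propSupp (P q))).card := by
    intro s hs
    have h := hD (Multiset.map P s.val)
      (Multiset.map_le_map (Finset.val_le_iff.2 (Finset.subset_univ s)))
      (by
        intro h
        rw [Multiset.map_eq_zero, Finset.val_eq_zero] at h
        exact hs.ne_empty h)
    rw [wmulti, Multiset.card_map] at h
    exact h
  have h4 : ∀ q, 4 ≤ (propSupp (P q)).card := by
    intro q
    have := hcard {q} (Finset.singleton_nonempty q)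
    simpa using this
  obtain ⟨U, hU, hUne, hT⟩ := wadm P h4 (fun p q => hX _ (by simp) _ (by simp))
  -- Hall matching
  obtain ⟨f0, hf0, hf0'⟩ := (Finset.all_card_le_biUnion_card_iff_exists_injective
    (fun q => propSupp (P q))).1 (by
      intro s
      rcases s.eq_empty_or_nonempty with rfl | hs
      · simp
      · have := hcard s hs
        omega)
  let D : (Fin k → ZMod (m+1)) → WR k (m+1) := fun f => ((MWpoly k (m+1) P).submatrix id f).det
  have hD0 : D f0 ≠ 0 := by
    intro h
    have h1 := congrArg (MvPolynomial.eval (fun z : Fin k × ZMod (m+1) =>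
      if z.2 = f0 z.1 then (1:ℝ) else 0)) h
    simp only [D, RingHom.map_det, map_zero] at h1
    have h2 : (MvPolynomial.eval (fun z : Fin k × ZMod (m+1) =>
      if z.2 = f0 z.1 then (1:ℝ) else 0)).mapMatrix ((MWpoly k (m+1) P).submatrix id f0) = 1 := by
      ext i j
      by_cases hij : i = j
      · subst hij
        simp [MWpoly, hf0']
      · have : f0 j ≠ f0 i := fun e => hij (hf0 e).symm
        simp only [MWpoly, RingHom.mapMatrix_apply, Matrix.map_apply, Matrix.submatrix_apply, id,
          Matrix.of_apply, Matrix.one_apply_ne hij]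
        split_ifs <;> simp [this]
    rw [h2, Matrix.det_one] at h1
    exact one_ne_zero h1
  let G : WR k (m+1) := ∏ f : Fin k → ZMod (m+1), if D f = 0 then 1 else D f
  have hG : G ≠ 0 := by
    refine Finset.prod_ne_zero_iff.2 fun f _ => ?_
    split_ifs with h
    · exact one_ne_zero
    · exact h
  obtain ⟨x, hxU, hx⟩ := wopen_poly U hU hUne G hG
  have hTx := hT x hxU
  let A : Matrix (Fin k) (ZMod (m+1)) ℝ :=
    wmask (fun q v => (v : ZMod (m+1)) ∈ propSupp (P q)) x
  let ev : WR k (m+1) →+* ℝ := MvPolynomial.eval (fun z => x z.1 z.2)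
  have hA : ∀ f : Fin k → ZMod (m+1), (A.submatrix id f).det = ev (D f) := by
    intro f
    simp only [D, RingHom.map_det]
    congr 1
    ext i j
    change wmask (n := m+1) (fun q v => (v : ZMod (m+1)) ∈ propSupp (P q)) x i (f j) =
      ev (MWpoly k (m+1) P i (f j))
    simp only [MWpoly, Matrix.of_apply, ev]
    by_cases h : f j ∈ propSupp (P i)
    · rw [if_pos h, MvPolynomial.eval_X]
      exact if_pos h
    · rw [if_neg h, map_zero]
      exact if_neg h
  have hM : ∀ f : Fin k → ZMod (m+1), ((MW k (m+1) P).submatrix id f).det =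
      algebraMap (WR k (m+1)) (WF k (m+1)) (D f) := by
    intro f
    simp only [D, RingHom.map_det]
    rfl
  have hM0 : ∀ f : Fin k → ZMod (m+1), ((MW k (m+1) P).submatrix id f).det ≠ 0 ↔ D f ≠ 0 := by
    intro f
    rw [hM, Ne, Ne, FaithfulSMul.algebraMap_eq_zero_iff]
  have hA0 : ∀ f : Fin k → ZMod (m+1), (A.submatrix id f).det ≠ 0 ↔ D f ≠ 0 := by
    intro f
    rw [hA]
    constructor
    · intro h h'
      rw [h', map_zero] at h
      exact h rfl
    · intro h h'
      apply hx
      change ev G = 0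
      simp only [G, map_prod]
      refine Finset.prod_eq_zero (Finset.mem_univ f) ?_
      rw [if_neg h, h']
  have hAf0 := (hA0 f0).2 hD0
  refine ⟨A, ?_, ?_, ?_⟩
  · apply le_antisymm
    · simpa using A.rank_le_card_height
    · have h1 : (A.submatrix id f0).rank = k := by
        have := Matrix.rank_of_isUnit (A.submatrix id f0)
          ((Matrix.isUnit_iff_isUnit_det _).2 (isUnit_iff_ne_zero.2 hAf0))
        simpa using this
      calc k = (A.submatrix id f0).rank := h1.symm
        _ ≤ A.rank := Matrix.rank_submatrix_le _ _ _
  · intro f hf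
    apply hTx f
    intro s t hst
    exact hf.monotone hst
  · intro S
    rw [wcols_iff A f0 hAf0, wcols_iff (MW k (m+1) P) f0 ((hM0 f0).2 hD0)]
    simp only [hA0, hM0]
end

section
/- Let W = (𝒫,[n]) be an admissible Wilson loop diagram containing two propagators p = (i,j) and q = (i,k) adjacent on the edge i, meaning: i, j, k are distinct, the cyclic interval from j to k not containing i is traversed in the direction i → j → k, and no propagator (i,m) ∈ 𝒫 has m strictly inside that interval. Suppose moreover k ≠ j+1 and r = (j,k) ∉ 𝒫. Then both Wilson loop diagrams W' = ((𝒫 ∖ {p}) ∪ {r}, [n]) and W'' = ((𝒫 ∖ {q}) ∪ {r}, [n]) are admissible. -/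
def vl (S : Finset (ℕ × ℕ)) : Finset ℕ :=
  S.biUnion fun e => {e.1, e.1 + 1, e.2, e.2 + 1}

theorem mem_vl {S : Finset (ℕ × ℕ)} {v : ℕ} :
    v ∈ vl S ↔ ∃ a b, (a, b) ∈ S ∧ (v = a ∨ v = a + 1 ∨ v = b ∨ v = b + 1) := by
  simp [vl]

theorem linMain (d : ℕ) : ∀ (x y : ℕ) (S : Finset (ℕ × ℕ)), y - x = d → x < y →
    (∀ a b, (a, b) ∈ S → x ≤ a ∧ a + 2 ≤ b ∧ b ≤ y) →
    (∀ a b c e, (a, b) ∈ S → (c, e) ∈ S → ¬ (a < c ∧ c < b ∧ b < e)) →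
    S.card + 3 ≤ (vl S ∪ {x, x + 1, y, y + 1}).card := by
  induction d using Nat.strong_induction_on with
  | _ d ih =>
  intro x y S hd hxy hS hc
  by_cases hy : y = x + 1
  · have : S = ∅ := by
      apply Finset.eq_empty_of_forall_notMem
      rintro ⟨a, b⟩ h
      have := hS a b h
      omega
    subst this; subst hy
    have h1 : ({x, x+1, x+2} : Finset ℕ) ⊆ vl ∅ ∪ {x, x + 1, x + 1, x + 1 + 1} := by
      intro v; simp; omega
    have h2 : ({x, x+1, x+2} : Finset ℕ).card = 3 := by
      rw [Finset.card_eq_three]; exact ⟨x, x+1, x+2, by omega, by omega, by omega, rfl⟩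
    have := Finset.card_le_card h1
    simp only [Finset.card_empty]; omega
  set T := S.erase (x, y) with hT
  have hcard : S.card ≤ T.card + 1 := by
    have : S.card - 1 ≤ T.card := Finset.pred_card_le_card_erase
    omega
  have hTS : ∀ a b, (a, b) ∈ T → (a, b) ∈ S := fun a b h => Finset.mem_of_mem_erase h
  have hTn : ∀ a b, (a, b) ∈ T → ¬ (a = x ∧ b = y) := by
    rintro a b h ⟨rfl, rfl⟩; simp [hT] at h
  by_cases hTe : T = ∅
  · have h1 : ({x, x+1, y, y+1} : Finset ℕ) ⊆ vl S ∪ {x, x + 1, y, y + 1} :=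
      Finset.subset_union_right
    have h2 : ({x, x+1, y, y+1} : Finset ℕ).card = 4 := by
      rw [Finset.card_insert_of_notMem, Finset.card_insert_of_notMem, Finset.card_pair]
      · omega
      · simp; omega
      · simp; omega
    have := Finset.card_le_card h1
    rw [hTe] at hcard
    simp at hcard; omega
  obtain ⟨⟨z, z'⟩, hz, hzmin⟩ := Finset.exists_min_image T Prod.fst
    (Finset.nonempty_iff_ne_empty.2 hTe)
  simp only [Prod.forall] at hzmin
  have hzS := hS _ _ (hTS _ _ hz)
  by_cases hzx : z = x
  · subst hzx
    obtain ⟨⟨x1, w⟩, hw, hwmax⟩ := Finset.exists_max_image (T.filter fun e => e.1 = z) Prod.snd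
      ⟨(z, z'), by simp [hz]⟩
    simp only [Finset.mem_filter, Prod.forall] at hw hwmax
    obtain ⟨hw, rfl⟩ := hw
    have hwS := hS _ _ (hTS _ _ hw)
    have hwn := hTn _ _ hw
    set A := T.filter fun e => e.2 ≤ w with hA
    set B := T.filter fun e => ¬ e.2 ≤ w with hB
    have hAB : A.card + B.card = T.card := Finset.card_filter_add_card_filter_not _
    have hBm : ∀ a b, (a, b) ∈ B → w ≤ a := by
      intro a b h
      simp only [hB, Finset.mem_filter] at h
      by_contra hlt
      have h1 := hS _ _ (hTS _ _ h.1)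
      have h2 := hc _ _ _ _ (hTS _ _ hw) (hTS _ _ h.1)
      have h3 : a = x1 := by omega
      have := hwmax a b ⟨h.1, h3⟩
      omega
    have iA := ih (w - x1) (by omega) x1 w A rfl (by omega)
      (by
        intro a b h
        simp only [hA, Finset.mem_filter] at h
        have := hS _ _ (hTS _ _ h.1); omega)
      (by
        intro a b c e h1 h2
        exact hc _ _ _ _ (hTS _ _ (Finset.mem_filter.1 h1).1)
          (hTS _ _ (Finset.mem_filter.1 h2).1))
    have iB := ih (y - w) (by omega) w y B rfl (by omega)
      (by
        intro a b h
        have h0 := hBm a b h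
        simp only [hB, Finset.mem_filter] at h
        have := hS _ _ (hTS _ _ h.1); omega)
      (by
        intro a b c e h1 h2
        exact hc _ _ _ _ (hTS _ _ (Finset.mem_filter.1 h1).1)
          (hTS _ _ (Finset.mem_filter.1 h2).1))
    set VA := vl A ∪ {x1, x1 + 1, w, w + 1} with hVA
    set VB := vl B ∪ {w, w + 1, y, y + 1} with hVB
    have hu := Finset.card_union_add_card_inter VA VB
    have hi : VA ∩ VB ⊆ {w, w + 1} := by
      intro v hv
      simp only [hVA, hVB, Finset.mem_inter, Finset.mem_union, mem_vl, Finset.mem_insert,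
        Finset.mem_singleton] at hv ⊢
      obtain ⟨h1, h2⟩ := hv
      have k1 : v ≤ w + 1 := by
        rcases h1 with ⟨a, b, h, hv⟩ | h
        · simp only [hA, Finset.mem_filter] at h
          have := hS _ _ (hTS _ _ h.1); omega
        · omega
      have k2 : w ≤ v := by
        rcases h2 with ⟨a, b, h, hv⟩ | h
        · have h0 := hBm a b h
          simp only [hB, Finset.mem_filter] at h
          have := hS _ _ (hTS _ _ h.1); omega
        · omega
      omega
    have hi2 := (Finset.card_le_card hi).trans Finset.card_le_two
    have hsub : VA ∪ VB ⊆ vl S ∪ {x1, x1 + 1, y, y + 1} := by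
      intro v hv
      simp only [hVA, hVB, Finset.mem_union, mem_vl, Finset.mem_insert,
        Finset.mem_singleton] at hv ⊢
      rcases hv with (⟨a, b, h, hv⟩ | h) | (⟨a, b, h, hv⟩ | h)
      · exact Or.inl ⟨a, b, hTS _ _ (Finset.mem_filter.1 h).1, hv⟩
      · exact Or.inl ⟨x1, w, hTS _ _ hw, h⟩
      · exact Or.inl ⟨a, b, hTS _ _ (Finset.mem_filter.1 h).1, hv⟩
      · by_cases hvw : v = w ∨ v = w + 1
        · exact Or.inl ⟨x1, w, hTS _ _ hw, by omega⟩
        · right; omega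
    have := Finset.card_le_card hsub
    omega
  · have iT := ih (y - z) (by omega) z y T rfl (by omega)
      (by
        intro a b h
        have := hzmin _ _ h
        have := hS _ _ (hTS _ _ h); omega)
      (by
        intro a b c e h1 h2
        exact hc _ _ _ _ (hTS _ _ h1) (hTS _ _ h2))
    have hx : x ∉ vl T ∪ {z, z + 1, y, y + 1} := by
      simp only [Finset.mem_union, mem_vl, Finset.mem_insert, Finset.mem_singleton]
      rintro (⟨a, b, h, hv⟩ | h)
      · have := hzmin _ _ h
        have := hS _ _ (hTS _ _ h); omega
      · omega
    have hsub : insert x (vl T ∪ {z, z + 1, y, y + 1}) ⊆ vl S ∪ {x, x + 1, y, y + 1} := by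
      intro v hv
      simp only [Finset.mem_union, mem_vl, Finset.mem_insert,
        Finset.mem_singleton] at hv ⊢
      rcases hv with h | ⟨a, b, h, hv⟩ | h
      · right; omega
      · exact Or.inl ⟨a, b, hTS _ _ h, hv⟩
      · by_cases hvw : v = z ∨ v = z + 1
        · exact Or.inl ⟨z, z', hTS _ _ hz, by omega⟩
        · right; omega
    have := Finset.card_le_card hsub
    rw [Finset.card_insert_of_notMem hx] at this
    omega

theorem linCor (S : Finset (ℕ × ℕ)) (hne : S.Nonempty)
    (hS : ∀ a b, (a, b) ∈ S → a + 2 ≤ b)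
    (hc : ∀ a b c e, (a, b) ∈ S → (c, e) ∈ S → ¬ (a < c ∧ c < b ∧ b < e)) :
    S.card + 3 ≤ (vl S).card := by
  obtain ⟨⟨x, x'⟩, hx, hxm⟩ := Finset.exists_min_image S Prod.fst hne
  obtain ⟨⟨y', y⟩, hy, hym⟩ := Finset.exists_max_image S Prod.snd hne
  simp only [Prod.forall] at hxm hym
  have h1 := hS _ _ hx
  have h2 := hym _ _ hx
  have := linMain (y - x) x y S rfl (by omega)
    (fun a b h => ⟨hxm _ _ h, hS _ _ h, hym _ _ h⟩) hc
  rwa [Finset.union_eq_left.2] at this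
  intro v hv
  simp only [Finset.mem_insert, Finset.mem_singleton] at hv
  rw [mem_vl]
  by_cases h : v = x ∨ v = x + 1
  · exact ⟨x, x', hx, by omega⟩
  · exact ⟨y', y, hy, by omega⟩

theorem cycMain (n : ℕ) [NeZero n] (S : Finset (ℕ × ℕ)) (hne : S.Nonempty)
    (hS : ∀ a b, (a, b) ∈ S → a + 2 ≤ b ∧ b < n ∧ ¬ (a = 0 ∧ b + 1 = n))
    (hc : ∀ a b c e, (a, b) ∈ S → (c, e) ∈ S → ¬ (a < c ∧ c < b ∧ b < e)) :
    S.card + 3 ≤ ((vl S).image (fun v : ℕ => (v : ZMod n))).card := by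
  have hcor := linCor S hne (fun a b h => (hS a b h).1) hc
  have hinj : ∀ u v : ℕ, u ≤ n → v ≤ n → (u : ZMod n) = v → u = v ∨ (u = 0 ∧ v = n) ∨
      (u = n ∧ v = 0) := by
    intro u v hu hv h
    rw [ZMod.natCast_eq_natCast_iff'] at h
    rcases hu.lt_or_eq with hu | hu <;> rcases hv.lt_or_eq with hv | hv
    · rw [Nat.mod_eq_of_lt hu, Nat.mod_eq_of_lt hv] at h; omega
    · rw [Nat.mod_eq_of_lt hu, hv, Nat.mod_self] at h; omega
    · rw [Nat.mod_eq_of_lt hv, hu, Nat.mod_self] at h; omega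
    · omega
  have hle : ∀ v ∈ vl S, v ≤ n := by
    intro v hv
    obtain ⟨a, b, h, hv⟩ := mem_vl.1 hv
    have := hS _ _ h; omega
  by_cases hb : 0 ∈ vl S ∧ n ∈ vl S
  · obtain ⟨h0, hn⟩ := hb
    have hS' : (0, n - 1) ∉ S := by
      intro h
      have := hS _ _ h; omega
    obtain ⟨a, b, hab, hv⟩ := mem_vl.1 h0
    have h1 := hS _ _ hab
    have ha : a = 0 := by omega
    subst ha
    obtain ⟨c, e, hce, hv2⟩ := mem_vl.1 hn
    have h2 := hS _ _ hce
    have he : e = n - 1 := by omega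
    subst he
    have hcor2 := linCor (insert (0, n - 1) S) (by simp)
      (by
        intro a b h
        simp only [Finset.mem_insert, Prod.mk.injEq] at h
        rcases h with h | h
        · omega
        · exact (hS _ _ h).1)
      (by
        intro a b c e h h'
        simp only [Finset.mem_insert, Prod.mk.injEq] at h h'
        rcases h with h | h <;> rcases h' with h' | h'
        · omega
        · have := hS _ _ h'; omega
        · have := hS _ _ h; omega
        · exact hc _ _ _ _ h h')
    rw [Finset.card_insert_of_notMem hS'] at hcor2
    have hsub : vl (insert (0, n - 1) S) ⊆ vl S := by
      intro v hv
      obtain ⟨a', b', h, hv⟩ := mem_vl.1 hv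
      simp only [Finset.mem_insert, Prod.mk.injEq] at h
      rcases h with h | h
      · rw [mem_vl]
        by_cases h' : v = 0 ∨ v = 1
        · exact ⟨0, b, hab, by omega⟩
        · exact ⟨c, n - 1, hce, by omega⟩
      · exact mem_vl.2 ⟨a', b', h, hv⟩
    have hcc := Finset.card_le_card hsub
    have hI : (((vl S).erase n).image (fun v : ℕ => (v : ZMod n))).card = ((vl S).erase n).card := by
      apply Finset.card_image_of_injOn
      intro u hu v hv huv
      simp only [Finset.coe_erase, Set.mem_diff, Finset.mem_coe, Set.mem_singleton_iff] at hu hv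
      have := hinj u v (hle u hu.1) (hle v hv.1) huv
      omega
    rw [Finset.card_erase_of_mem hn] at hI
    have := Finset.card_le_card (Finset.image_subset_image (f := fun v : ℕ => (v : ZMod n))
      (Finset.erase_subset n (vl S)))
    omega
  · rw [Finset.card_image_of_injOn]
    · exact hcor
    · intro u hu v hv huv
      rcases hinj u v (hle u hu) (hle v hv) huv with h | ⟨h, h'⟩ | ⟨h, h'⟩
      · exact h
      · subst h; subst h'; exact absurd ⟨hu, hv⟩ hb
      · subst h; subst h'; exact absurd ⟨hv, hu⟩ hb

theorem sub_val' {n : ℕ} [NeZero n] (a b : ZMod n) :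
    (a.val ≤ b.val ∧ (b - a).val = b.val - a.val) ∨
      (b.val < a.val ∧ (b - a).val + a.val = n + b.val) := by
  rcases le_or_gt a.val b.val with h | h
  · exact Or.inl ⟨h, ZMod.val_sub h⟩
  · right
    refine ⟨h, ?_⟩
    have h1 : (a - b).val = a.val - b.val := ZMod.val_sub h.le
    have h2 : b - a = -(a - b) := by ring
    have h3 : a - b ≠ 0 := by
      intro h0; rw [h0, ZMod.val_zero] at h1; omega
    have : NeZero (a - b) := ⟨h3⟩
    have := ZMod.val_neg_of_ne_zero (a - b)
    rw [h2, this, h1]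
    have := ZMod.val_lt a
    omega

theorem inside_iff {n : ℕ} [NeZero n] (a b c : ZMod n) : Inside a b c ↔
    (a.val < b.val ∧ b.val < c.val) ∨ (b.val < c.val ∧ c.val < a.val) ∨
      (c.val < a.val ∧ a.val < b.val) := by
  unfold Inside
  have h1 := sub_val' a b
  have h2 := sub_val' a c
  have := ZMod.val_lt a
  have := ZMod.val_lt b
  have := ZMod.val_lt c
  omega

def nrm {n : ℕ} (p : ZMod n × ZMod n) : ℕ × ℕ := (min p.1.val p.2.val, max p.1.val p.2.val)

theorem nrm_eq {n : ℕ} [NeZero n] {p q : ZMod n × ZMod n} (h : nrm p = nrm q) :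
    (p.1 = q.1 ∧ p.2 = q.2) ∨ (p.1 = q.2 ∧ p.2 = q.1) := by
  simp only [nrm, Prod.mk.injEq] at h
  have hv := ZMod.val_injective n
  by_cases h1 : p.1.val = q.1.val
  · exact Or.inl ⟨hv h1, hv (by omega)⟩
  · exact Or.inr ⟨hv (by omega), hv (by omega)⟩

theorem nrm_supp {n : ℕ} [NeZero n] {p q : ZMod n × ZMod n} (h : nrm p = nrm q) :
    propSupp p = propSupp q := by
  rcases nrm_eq h with ⟨h1, h2⟩ | ⟨h1, h2⟩
  · simp [propSupp, h1, h2]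
  · ext v; simp only [propSupp, h1, h2, Finset.mem_insert, Finset.mem_singleton]; tauto

def Good (n : ℕ) (Ps : Multiset (ZMod n × ZMod n)) : Prop :=
  (∀ p ∈ Ps, ∀ q ∈ Ps, ¬ Cross p q) ∧
  (∀ p ∈ Ps, p.1 ≠ p.2 ∧ p.1 + 1 ≠ p.2 ∧ p.2 + 1 ≠ p.1) ∧ (Ps.map nrm).Nodup

theorem card_supp_le {n : ℕ} (p : ZMod n × ZMod n) : (propSupp p).card ≤ 4 := Finset.card_le_four

theorem good_of_adm {n : ℕ} [NeZero n] {Ps : Multiset (ZMod n × ZMod n)}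
    (h : Admissible n Ps) : Good n Ps := by
  obtain ⟨h1, h2, -⟩ := h
  have key : ∀ p q : ZMod n × ZMod n, nrm p = nrm q → ¬ (p ::ₘ q ::ₘ 0 ≤ Ps) := by
    intro p q hpq hle
    have := h2 _ hle (by simp)
    simp [multiSupp, nrm_supp hpq] at this
    have := card_supp_le q
    omega
  have hnd : Ps.Nodup := by
    rw [Multiset.nodup_iff_le]
    intro a ha
    exact key a a rfl ha
  refine ⟨h1, ?_, ?_⟩
  · intro p hp
    have := h2 {p} (by simpa using hp) (by simp)
    simp only [multiSupp, Multiset.card_singleton, Multiset.map_singleton,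
      Multiset.sup_singleton] at this
    refine ⟨?_, ?_, ?_⟩
    · intro h
      have h' : propSupp p ⊆ {p.1, p.1 + 1} := by
        intro v; simp [propSupp, ← h]
      have := (Finset.card_le_card h').trans Finset.card_le_two
      omega
    · intro h
      have h' : propSupp p ⊆ {p.1, p.1 + 1, p.2 + 1} := by
        intro v; simp [propSupp, ← h]
      have := (Finset.card_le_card h').trans Finset.card_le_three
      omega
    · intro h
      have h' : propSupp p ⊆ {p.1, p.1 + 1, p.2} := by
        intro v; simp [propSupp, ← h]; tauto
      have := (Finset.card_le_card h').trans Finset.card_le_three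
      omega
  · refine Multiset.Nodup.map_on ?_ hnd
    intro p hp q hq hpq
    by_contra hne
    apply key p q hpq
    rw [Multiset.le_iff_subset (by simp [hne])]
    intro v hv
    simp at hv
    rcases hv with rfl | rfl <;> assumption

theorem val_succ' {n : ℕ} [NeZero n] (hn : 2 ≤ n) (a b : ZMod n) (h : a + 1 ≠ b) :
    a.val + 1 ≠ b.val ∧ ¬ (a.val + 1 = n ∧ b.val = 0) := by
  constructor
  · intro h'
    apply h
    have : ((a.val + 1 : ℕ) : ZMod n) = (b.val : ZMod n) := by rw [h']
    simpa using this
  · rintro ⟨h1, h2⟩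
    apply h
    have : ((a.val + 1 : ℕ) : ZMod n) = 0 := by rw [h1]; simp
    rw [(ZMod.val_eq_zero b).1 h2]
    simpa using this

theorem dens_of_good {n : ℕ} [NeZero n] (hn : 2 ≤ n) {Ps : Multiset (ZMod n × ZMod n)}
    (h : Good n Ps) (P : Multiset (ZMod n × ZMod n)) (hP : P ≤ Ps) (hP0 : P ≠ 0) :
    Multiset.card P + 3 ≤ (multiSupp P).card := by
  obtain ⟨h1, h2, h3⟩ := h
  have hnd : (P.map nrm).Nodup := Multiset.nodup_of_le (Multiset.map_le_map hP) h3
  have hmem : ∀ p ∈ P, p ∈ Ps := fun p hp => Multiset.mem_of_le hP hp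
  set S := (P.map nrm).toFinset with hSd
  have hcard : S.card = Multiset.card P := by
    rw [hSd, Multiset.toFinset_card_of_nodup hnd, Multiset.card_map]
  have hSm : ∀ a b, (a, b) ∈ S → ∃ p ∈ P, min p.1.val p.2.val = a ∧ max p.1.val p.2.val = b := by
    intro a b h
    simpa [hSd, nrm] using h
  have hmain := cycMain n S
    (by
      obtain ⟨p, hp⟩ := Multiset.exists_mem_of_ne_zero hP0
      exact ⟨nrm p, by simp only [hSd, Multiset.mem_toFinset]; exact Multiset.mem_map_of_mem _ hp⟩)
    (by
      intro a b h
      obtain ⟨p, hp, ha, hb⟩ := hSm a b h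
      obtain ⟨k1, k2, k3⟩ := h2 p (hmem p hp)
      have k1' : p.1.val ≠ p.2.val := fun h => k1 (ZMod.val_injective n h)
      have := val_succ' hn _ _ k2
      have := val_succ' hn _ _ k3
      have := ZMod.val_lt p.1
      have := ZMod.val_lt p.2
      omega)
    (by
      intro a b c e h h'
      obtain ⟨p, hp, ha, hb⟩ := hSm a b h
      obtain ⟨q, hq, hc, he⟩ := hSm c e h'
      have := h1 p (hmem p hp) q (hmem q hq)
      simp only [Cross, inside_iff] at this
      omega)
  rw [← hcard]
  refine hmain.trans (Finset.card_le_card ?_)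
  intro v hv
  obtain ⟨u, hu, rfl⟩ := Finset.mem_image.1 hv
  obtain ⟨a, b, hab, hu⟩ := mem_vl.1 hu
  obtain ⟨p, hp, ha, hb⟩ := hSm a b hab
  have hle : propSupp p ⊆ multiSupp P :=
    Multiset.le_sup (Multiset.mem_map_of_mem _ hp)
  apply hle
  have hu' : u = p.1.val ∨ u = p.1.val + 1 ∨ u = p.2.val ∨ u = p.2.val + 1 := by omega
  rcases hu' with h | h | h | h <;> subst h <;> simp [propSupp]

theorem adm_of_good {n : ℕ} [NeZero n] {Ps : Multiset (ZMod n × ZMod n)}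
    (h : Good n Ps) (hc : Multiset.card Ps + 4 ≤ n) : Admissible n Ps :=
  ⟨h.1, dens_of_good (by omega) h, hc⟩

theorem inside_flip {n : ℕ} [NeZero n] {a b c d : ZMod n} (h : Inside a b c) (h' : Inside c d a) :
    Inside b c d ∧ Inside d a b := by
  rw [inside_iff] at *
  rw [inside_iff]
  omega

theorem inside_rot {n : ℕ} [NeZero n] {a b c : ZMod n} (h : Inside a b c) : Inside b c a := by
  rw [inside_iff] at *
  omega

theorem inside_trans {n : ℕ} [NeZero n] {a b c d : ZMod n} (h : Inside a b c)
    (h' : Inside a c d) : Inside a b d := by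
  unfold Inside at *
  omega

theorem cross_symm {n : ℕ} [NeZero n] {p q : ZMod n × ZMod n} (h : Cross p q) : Cross q p := by
  rcases h with ⟨h, h'⟩ | ⟨h, h'⟩
  · have := inside_flip h h'
    exact Or.inr this
  · have := inside_flip h' h
    exact Or.inl this

theorem cross_aux {n : ℕ} [NeZero n] (i j k a b : ZMod n) (ho : Inside i j k)
    (hi : b ≠ i) (hp : Inside i b j → Inside j a i → False)
    (hq : Inside i a k → Inside k b i → False) (h1 : Inside j a k) (h2 : Inside k b j) : False := by
  have hi' : b.val ≠ i.val := fun e => hi (ZMod.val_injective n e)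
  have k1 : Inside j a i := inside_trans h1 (inside_rot ho)
  have k2 : Inside i a k := by
    rw [inside_iff] at ho h1 ⊢
    omega
  have k3 : Inside i b j ∨ Inside k b i := by
    rw [inside_iff] at ho h2 ⊢
    rw [inside_iff]
    omega
  rcases k3 with h | h
  · exact hp h k1
  · exact hq k2 h

theorem good_replace {n : ℕ} [NeZero n] {Ps : Multiset (ZMod n × ZMod n)}
    (h : Good n Ps) (hn : 2 ≤ n) (i j k : ZMod n)
    (hp : (i, j) ∈ Ps) (hq : (i, k) ∈ Ps)
    (horder : Inside i j k)
    (hadj : ∀ m : ZMod n, ((i, m) ∈ Ps ∨ (m, i) ∈ Ps) → ¬ Inside j m k)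
    (hk : k ≠ j + 1)
    (hr : (j, k) ∉ Ps ∧ (k, j) ∉ Ps) (t : ZMod n × ZMod n) :
    Good n ((j, k) ::ₘ Ps.erase t) := by
  obtain ⟨h1, h2, h3⟩ := h
  have hins := (inside_iff _ _ _).1 horder
  have hcr : ∀ q ∈ Ps, ¬ Cross (j, k) q ∧ ¬ Cross q (j, k) := by
    rintro ⟨a, b⟩ hab
    have c0 : ¬ Cross (j, k) (a, b) := by
      rintro (⟨u, v⟩ | ⟨u, v⟩)
      · exact cross_aux i j k a b horder (fun e => hadj a (Or.inr (e ▸ hab)) u)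
          (fun x y => h1 _ hp _ hab (Or.inr ⟨x, y⟩)) (fun x y => h1 _ hq _ hab (Or.inl ⟨x, y⟩)) u v
      · exact cross_aux i j k b a horder (fun e => hadj b (Or.inl (e ▸ hab)) u)
          (fun x y => h1 _ hp _ hab (Or.inl ⟨x, y⟩)) (fun x y => h1 _ hq _ hab (Or.inr ⟨x, y⟩)) u v
    exact ⟨c0, fun c => c0 (cross_symm c)⟩
  refine ⟨?_, ?_, ?_⟩
  · intro p hp q hq
    rw [Multiset.mem_cons] at hp hq
    rcases hp with rfl | hp <;> rcases hq with rfl | hq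
    · simp only [Cross, inside_iff]; omega
    · exact (hcr q (Multiset.mem_of_mem_erase hq)).1
    · exact (hcr p (Multiset.mem_of_mem_erase hp)).2
    · exact h1 p (Multiset.mem_of_mem_erase hp) q (Multiset.mem_of_mem_erase hq)
  · intro p hp
    rw [Multiset.mem_cons] at hp
    rcases hp with rfl | hp
    · refine ⟨?_, fun e => hk e.symm, ?_⟩
      · intro e
        simp only at e
        rw [e] at hins; omega
      · intro e
        simp only at e
        have h4 : ((k.val + 1 : ℕ) : ZMod n) = j := by rw [← e]; simp
        have hkl := ZMod.val_lt k
        have hil := ZMod.val_lt i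
        have hjl := ZMod.val_lt j
        rcases (show k.val + 1 < n ∨ k.val + 1 = n by omega) with h5 | h5
        · have := ZMod.val_cast_of_lt h5
          rw [h4] at this; omega
        · rw [h5, ZMod.natCast_self] at h4
          have : j.val = 0 := by rw [← h4]; simp
          omega
    · exact h2 p (Multiset.mem_of_mem_erase hp)
  · rw [Multiset.map_cons, Multiset.nodup_cons]
    refine ⟨?_, Multiset.nodup_of_le (Multiset.map_le_map (Multiset.erase_le _ _)) h3⟩
    intro hm
    obtain ⟨⟨a, b⟩, hab, e⟩ := Multiset.mem_map.1 hm
    have hab := Multiset.mem_of_mem_erase hab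
    rcases nrm_eq e with ⟨e1, e2⟩ | ⟨e1, e2⟩ <;> simp only at e1 e2 <;> subst e1 <;> subst e2
    · exact hr.1 hab
    · exact hr.2 hab

/-- let `(Ps,[n])` be an admissible Wilson loop diagram containing
propagators `p = (i,j)` and `q = (i,k)` adjacent on the edge `i` (with `i,j,k`
distinct, the cyclic interval from `j` to `k` not containing `i` traversed in the
direction `i → j → k`, and no propagator `(i,m)` having `m` strictly inside that
interval).  If `k ≠ j+1` and `r = (j,k) ∉ Ps`, then both diagrams obtained by
replacing `p` (resp. `q`) with `r` are admissible. -/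
theorem statement15 (n : ℕ) (Ps : Multiset (ZMod n × ZMod n))
    (hW : Admissible n Ps) (i j k : ZMod n)
    (hp : (i, j) ∈ Ps) (hq : (i, k) ∈ Ps)
    (hij : i ≠ j) (hik : i ≠ k) (hjk : j ≠ k)
    (horder : Inside i j k)
    (hadj : ∀ m : ZMod n, ((i, m) ∈ Ps ∨ (m, i) ∈ Ps) → ¬ Inside j m k)
    (hk : k ≠ j + 1)
    (hr : (j, k) ∉ Ps ∧ (k, j) ∉ Ps) :
    Admissible n ((j, k) ::ₘ Ps.erase (i, j)) ∧
    Admissible n ((j, k) ::ₘ Ps.erase (i, k)) := by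
  have hc := hW.2.2
  haveI : NeZero n := ⟨by omega⟩
  have hg := good_of_adm hW
  have hg' := good_replace hg (by omega) i j k hp hq horder hadj hk hr
  refine ⟨adm_of_good (hg' _) ?_, adm_of_good (hg' _) ?_⟩
  · rw [Multiset.card_cons, Multiset.card_erase_add_one hp]; exact hc
  · rw [Multiset.card_cons, Multiset.card_erase_add_one hq]; exact hc
end
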